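/- Let X_0, X_1, ... be a stationary reversible Markov chain on a countable state space S with reversible stationary distribution π, X_0 ~ π, and label function ω : S → ℝ. For ℓ, k ∈ ℕ, let ρ_{0,ℓ}^k denote the probability that X_0 is ℓ-small among X_0, ..., X_k. Then (k+1)·(ρ_{0,ℓ}^k)^2 ≤ 2ℓ + 1; equivalently, ρ_{0,ℓ}^k ≤ √((2ℓ+1)/(k+1)). -/

import Mathlib

open MeasureTheory Finset
open scoped ENNReal

/-- `X j` is `ℓ`-small among `X 0, ..., X k` (at the sample point `a`): there are at most `ℓ`
indices `i ≠ j` in `{0, ..., k}` with `ω (X i a) ≤ ω (X j a)`. -/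
def IsSmallAt {Ω S : Type*} (X : ℕ → Ω → S) (ω : S → ℝ) (j ℓ k : ℕ) (a : Ω) : Prop :=
  ((Finset.range (k + 1)).filter (fun i => i ≠ j ∧ ω (X i a) ≤ ω (X j a))).card ≤ ℓ

/-!
Given `X j = x`, detailed balance makes the reversed past `X (j - 1), ..., X 0` and the future
`X (j + 1), ..., X k` independent, and both evolve as the chain started at `x`. Let `r x` be the
probability that the chain started at `x` meets at most `ℓ` labels `≤ ω x` in its next `k` steps.
Fewer steps only make this more likely, so `X j` is `2ℓ`-small with probability at least
`∑ π x * r x ^ 2 ≥ (∑ π x * r x) ^ 2`, where `∑ π x * r x` is the probability that `X 0` is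
`ℓ`-small. Summing over `j` finishes the proof, since at most `2ℓ + 1` indices can be `2ℓ`-small.
-/

section WeightedCauchySchwarz

lemma two_mul_mul_le_sq_add_sq {R : Type*} [CommSemiring R] [LinearOrder R]
    [CanonicallyOrderedAdd R] (a b : R) : 2 * (a * b) ≤ a ^ 2 + b ^ 2 := by
  wlog hab : a ≤ b generalizing a b
  · simpa only [mul_comm, add_comm] using this b a (le_of_not_ge hab)
  obtain ⟨d, rfl⟩ := exists_add_of_le hab
  calc 2 * (a * (a + d)) ≤ 2 * (a * (a + d)) + d ^ 2 := le_self_add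
    _ = a ^ 2 + (a + d) ^ 2 := by ring

lemma sq_tsum_mul_le_tsum_mul_tsum_mul_sq {ι : Type*} (w f : ι → ℝ≥0∞) :
    (∑' i, w i * f i) ^ 2 ≤ (∑' i, w i) * ∑' i, w i * f i ^ 2 := by
  suffices h : 2 * (∑' i, w i * f i) ^ 2 ≤ 2 * ((∑' i, w i) * ∑' i, w i * f i ^ 2) from
    (ENNReal.mul_le_mul_iff_right (by simp) (by simp)).1 h
  calc 2 * (∑' i, w i * f i) ^ 2
      = ∑' i, ∑' j, w i * w j * (2 * (f i * f j)) := by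
        simp only [sq, ← ENNReal.tsum_mul_right, ← ENNReal.tsum_mul_left]
        exact tsum_congr fun i => tsum_congr fun j => by ring
    _ ≤ ∑' i, ∑' j, w i * w j * (f i ^ 2 + f j ^ 2) := by
        gcongr
        exact two_mul_mul_le_sq_add_sq _ _
    _ = (∑' i, w i * f i ^ 2) * (∑' j, w j) + (∑' i, w i) * ∑' j, w j * f j ^ 2 := by
        simp only [← ENNReal.tsum_mul_right, ← ENNReal.tsum_add]
        refine tsum_congr fun i => ?_
        simp only [← ENNReal.tsum_mul_left, ← ENNReal.tsum_add]
        exact tsum_congr fun j => by ring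
    _ = 2 * ((∑' i, w i) * ∑' i, w i * f i ^ 2) := by ring

end WeightedCauchySchwarz

section SmallEntries

variable {S α : Type*} [LinearOrder α] {ω : S → α} {ℓ m : ℕ} {x : S} {p q : List S}

lemma card_filter_getElem?_eq_countP (s : S → Prop) [DecidablePred s] (L : List S) :
    #{i ∈ range L.length | ∃ x ∈ L[i]?, s x} = L.countP s := by
  induction L with
  | nil => simp
  | cons a L ih =>
    rw [card_filter] at ih ⊢
    rw [List.length_cons, sum_range_succ']
    simp only [List.getElem?_cons_succ, List.getElem?_cons_zero, ih, List.countP_cons]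
    simp

/-- The `j`-th entry of the path `L` is `ℓ`-small among all its entries. The count includes the
entry itself, hence the bound `ℓ + 1`. False if `j` is out of range. -/
def IsSmallIn (ω : S → α) (ℓ : ℕ) (L : List S) (j : ℕ) : Prop :=
  ∃ x ∈ L[j]?, L.countP (ω · ≤ ω x) ≤ ℓ + 1

lemma isSmallIn_zero_cons : IsSmallIn ω ℓ (x :: p) 0 ↔ p.countP (ω · ≤ ω x) ≤ ℓ := by
  simp [IsSmallIn]

lemma IsSmallIn.reverse_append_cons (hp : IsSmallIn ω ℓ (x :: p) 0)
    (hq : IsSmallIn ω m (x :: q) 0) : IsSmallIn ω (ℓ + m) (p.reverse ++ x :: q) p.length := by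
  rw [isSmallIn_zero_cons] at hp hq
  refine ⟨x, by simp, ?_⟩
  simp only [List.countP_append, List.countP_reverse, List.countP_cons, le_refl, decide_true,
    if_true]
  lia

lemma IsSmallIn.of_append_zero (h : IsSmallIn ω ℓ (x :: (p ++ q)) 0) :
    IsSmallIn ω ℓ (x :: p) 0 := by
  rw [isSmallIn_zero_cons, List.countP_append] at h
  exact isSmallIn_zero_cons.2 (le_of_add_le_left h)

open Classical in
lemma card_isSmallIn_le (ω : S → α) (ℓ : ℕ) (L : List S) :
    #{j ∈ range L.length | IsSmallIn ω ℓ L j} ≤ ℓ + 1 := by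
  let small := L.filter fun x => decide (L.countP (ω · ≤ ω x) ≤ ℓ + 1)
  have card_eq : #{j ∈ range L.length | IsSmallIn ω ℓ L j} = small.length := by
    rw [← List.countP_eq_length_filter, ← card_filter_getElem?_eq_countP]
    congr!
  rw [card_eq]
  cases hx : small.argmax ω with
  | none => simp [List.argmax_eq_none.1 hx]
  | some x =>
    have hx_small : L.countP (ω · ≤ ω x) ≤ ℓ + 1 := by
      simpa using (List.mem_filter.1 (List.argmax_mem hx)).2
    calc small.length = small.countP (ω · ≤ ω x) :=
          (List.countP_eq_length.2 fun y hy => by simpa using List.le_of_mem_argmax hy hx).symm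
      _ ≤ L.countP (ω · ≤ ω x) := List.filter_sublist.countP_le
      _ ≤ ℓ + 1 := hx_small

lemma isSmallAt_iff_isSmallIn {Ω : Type*} (X : ℕ → Ω → S) (ω : S → ℝ) {j k : ℕ} (hj : j ≤ k)
    (ℓ : ℕ) (a : Ω) :
    IsSmallAt X ω j ℓ k a ↔ IsSmallIn ω ℓ (List.ofFn fun i : Fin (k + 1) => X i a) j := by
  have card_le : #{i ∈ range (k + 1) | ω (X i a) ≤ ω (X j a)}
      = (List.ofFn fun i : Fin (k + 1) => X i a).countP (ω · ≤ ω (X j a)) := by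
    rw [← card_filter_getElem?_eq_countP, List.length_ofFn]
    refine congrArg card (filter_congr fun i hi => ?_)
    simp [-List.ofFn_succ, mem_range.1 hi]
  have card_ne : #{i ∈ range (k + 1) | i ≠ j ∧ ω (X i a) ≤ ω (X j a)} + 1
      = #{i ∈ range (k + 1) | ω (X i a) ≤ ω (X j a)} := by
    rw [filter_and, filter_ne', erase_inter, inter_eq_right.2 (filter_subset _ _)]
    exact card_erase_add_one (by simp [hj])
  have getElem_j : (List.ofFn fun i : Fin (k + 1) => X i a)[j]? = some (X j a) := by
    simp [-List.ofFn_succ, Nat.lt_succ_iff.2 hj]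
  simp only [IsSmallIn, IsSmallAt, getElem_j, Option.mem_some_iff, exists_eq_left', ← card_le,
    ← card_ne, add_le_add_iff_right]

end SmallEntries

section PathExpectation

variable {S : Type*} {w : S → ℝ≥0∞} {P : S → S → ℝ≥0∞} {n : ℕ}

/-- The probability that the chain with initial distribution `w` and transition matrix `P` starts
with the states listed in the argument. -/
noncomputable def pathWeight (w : S → ℝ≥0∞) (P : S → S → ℝ≥0∞) : List S → ℝ≥0∞
  | [] => 1
  | x :: l => w x * pathWeight (P x) P l

lemma pathWeight_ofFn (w : S → ℝ≥0∞) (P : S → S → ℝ≥0∞) (n : ℕ) (x : ℕ → S) :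
    pathWeight w P (List.ofFn fun i : Fin (n + 1) => x i)
      = w (x 0) * ∏ i ∈ range n, P (x i) (x (i + 1)) := by
  induction n generalizing w x with
  | zero => simp [pathWeight]
  | succ n ih =>
    rw [List.ofFn_succ, pathWeight, prod_range_succ', mul_comm (∏ i ∈ range n, _)]
    simpa using congrArg (w (x 0) * ·) (ih (P (x 0)) fun i => x (i + 1))

/-- The expectation of `F [X 0, ..., X (n - 1)]` for the chain `X` with initial distribution `w` and
transition matrix `P`. In particular, `pathExp (P x) P n` averages over the `n` states that follow
a visit to `x`. -/
noncomputable def pathExp (w : S → ℝ≥0∞) (P : S → S → ℝ≥0∞) (n : ℕ) (F : List S → ℝ≥0∞) : ℝ≥0∞ :=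
  ∑' z : Fin n → S, pathWeight w P (List.ofFn z) * F (List.ofFn z)

lemma pathExp_zero (F : List S → ℝ≥0∞) : pathExp w P 0 F = F [] := by
  simp [pathExp, pathWeight]

lemma pathExp_succ (F : List S → ℝ≥0∞) :
    pathExp w P (n + 1) F = ∑' x, w x * pathExp (P x) P n fun l => F (x :: l) := by
  simp only [pathExp, ← ENNReal.tsum_mul_left]
  rw [← (Fin.consEquiv fun _ : Fin (n + 1) => S).tsum_eq, ENNReal.tsum_prod']
  simp [Fin.consEquiv, List.ofFn_succ, pathWeight, mul_assoc]

lemma pathExp_mono {F G : List S → ℝ≥0∞} (h : ∀ l, l.length = n → F l ≤ G l) :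
    pathExp w P n F ≤ pathExp w P n G :=
  ENNReal.tsum_le_tsum fun z => by gcongr; exact h _ List.length_ofFn

lemma pathExp_const_mul (c : ℝ≥0∞) (F : List S → ℝ≥0∞) :
    pathExp w P n (fun l => c * F l) = c * pathExp w P n F := by
  simp only [pathExp, ← ENNReal.tsum_mul_left, mul_left_comm c]

lemma pathExp_mul_const (F : List S → ℝ≥0∞) (c : ℝ≥0∞) :
    pathExp w P n (fun l => F l * c) = pathExp w P n F * c := by
  simp only [mul_comm _ c, pathExp_const_mul]

lemma pathExp_tsum {ι : Type*} (F : ι → List S → ℝ≥0∞) :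
    pathExp w P n (fun l => ∑' i, F i l) = ∑' i, pathExp w P n (F i) := by
  simp only [pathExp, ← ENNReal.tsum_mul_left]
  exact ENNReal.tsum_comm

lemma pathExp_finsetSum {ι : Type*} (s : Finset ι) (F : ι → List S → ℝ≥0∞) :
    pathExp w P n (fun l => ∑ i ∈ s, F i l) = ∑ i ∈ s, pathExp w P n (F i) := by
  simp only [pathExp, mul_sum]
  exact Summable.tsum_finsetSum fun _ _ => ENNReal.summable

lemma pathExp_succ_le (hw : ∑' x, w x ≤ 1) (hP : ∀ x, ∑' y, P x y ≤ 1) {F : List S → ℝ≥0∞}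
    (hF : ∀ l y, F (l ++ [y]) ≤ F l) : pathExp w P (n + 1) F ≤ pathExp w P n F := by
  induction n generalizing w F with
  | zero =>
    simp only [pathExp_succ, pathExp_zero]
    calc ∑' x, w x * F [x] ≤ ∑' x, w x * F [] := by gcongr with x; exact hF [] x
      _ ≤ F [] := by rw [ENNReal.tsum_mul_right]; exact mul_le_of_le_one_left' hw
  | succ n ih =>
    rw [pathExp_succ, pathExp_succ (n := n)]
    gcongr with x
    exact ih (hP x) fun l => hF (x :: l)

lemma antitone_pathExp (hw : ∑' x, w x ≤ 1) (hP : ∀ x, ∑' y, P x y ≤ 1) {F : List S → ℝ≥0∞}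
    (hF : ∀ l y, F (l ++ [y]) ≤ F l) : Antitone fun n => pathExp w P n F :=
  antitone_nat_of_succ_le fun _ => pathExp_succ_le hw hP hF

lemma pathExp_const_le (hw : ∑' x, w x ≤ 1) (hP : ∀ x, ∑' y, P x y ≤ 1) (c : ℝ≥0∞) :
    pathExp w P n (fun _ => c) ≤ c := by
  simpa only [pathExp_zero] using antitone_pathExp hw hP (F := fun _ => c)
    (fun _ _ => le_rfl) n.zero_le

/- Each step of the induction uses detailed balance to move one state from the past to the
future. -/
lemma tsum_pathExp_past_future (hdb : ∀ x y, w x * P x y = w y * P y x) (F : List S → ℝ≥0∞)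
    (j m : ℕ) :
    ∑' x, w x * pathExp (P x) P j
        (fun past => pathExp (P x) P m fun future => F (past.reverse ++ x :: future))
      = pathExp w P (j + m + 1) F := by
  induction j generalizing m with
  | zero => simp [pathExp_zero, pathExp_succ]
  | succ j ih =>
    rw [show j + 1 + m + 1 = j + (m + 1) + 1 by ring, ← ih (m + 1)]
    simp only [pathExp_succ, ← ENNReal.tsum_mul_left, pathExp_tsum, pathExp_const_mul]
    rw [ENNReal.tsum_comm]
    refine tsum_congr fun y => tsum_congr fun x => ?_
    rw [← mul_assoc, ← mul_assoc, hdb x y]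
    simp

lemma measure_path_mem_le_pathExp {Ω : Type*} [MeasurableSpace Ω] [Countable S] {μ : Measure Ω}
    {X : ℕ → Ω → S}
    (hX : ∀ x : ℕ → S,
      μ {a | ∀ i ≤ n, X i a = x i} = w (x 0) * ∏ i ∈ range n, P (x i) (x (i + 1)))
    (A : Set (List S)) :
    μ {a | (List.ofFn fun i : Fin (n + 1) => X i a) ∈ A} ≤ pathExp w P (n + 1) (A.indicator 1) := by
  have measure_cylinder (z : Fin (n + 1) → S) :
      μ {a | ∀ i : Fin (n + 1), X i a = z i} = pathWeight w P (List.ofFn z) := by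
    let x (i : ℕ) : S := z (Fin.ofNat (n + 1) i)
    have hx (i : Fin (n + 1)) : x i = z i := by simp [x]
    calc μ {a | ∀ i : Fin (n + 1), X i a = z i} = μ {a | ∀ i ≤ n, X i a = x i} := by
          simp only [← hx, Fin.forall_iff, Nat.lt_succ_iff]
      _ = pathWeight w P (List.ofFn z) := by rw [hX, ← pathWeight_ofFn]; simp only [hx]
  calc μ {a | (List.ofFn fun i : Fin (n + 1) => X i a) ∈ A}
      ≤ μ (⋃ z : Fin (n + 1) → S, {a | (∀ i : Fin (n + 1), X i a = z i) ∧ List.ofFn z ∈ A}) :=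
        measure_mono fun a ha => Set.mem_iUnion.2 ⟨fun i => X i a, fun _ => rfl, ha⟩
    _ ≤ ∑' z : Fin (n + 1) → S, μ {a | (∀ i : Fin (n + 1), X i a = z i) ∧ List.ofFn z ∈ A} :=
        measure_iUnion_le _
    _ = pathExp w P (n + 1) (A.indicator 1) := tsum_congr fun z => by
        by_cases hz : List.ofFn z ∈ A <;> simp [-List.ofFn_succ, hz, measure_cylinder]

end PathExpectation

section SmallProbability

variable {S α : Type*} [LinearOrder α] {π : S → ℝ≥0∞} {P : S → S → ℝ≥0∞} {ω : S → α} {ℓ : ℕ}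

/-- The probability that the initial state of the chain started at `x` is `ℓ`-small among the first
`n + 1` states. -/
noncomputable def smallProb (P : S → S → ℝ≥0∞) (ω : S → α) (ℓ n : ℕ) (x : S) : ℝ≥0∞ :=
  pathExp (P x) P n ({l | IsSmallIn ω ℓ (x :: l) 0}.indicator 1)

lemma antitone_smallProb (hP : ∀ x, ∑' y, P x y ≤ 1) (x : S) :
    Antitone fun n => smallProb P ω ℓ n x :=
  antitone_pathExp (hP x) hP fun l y => by
    by_cases h : IsSmallIn ω ℓ (x :: (l ++ [y])) 0
    · simp [h, h.of_append_zero]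
    · simp [h]

lemma tsum_smallProb_mul_smallProb_le (hdb : ∀ x y, π x * P x y = π y * P y x) (ω : S → α)
    (ℓ m i j : ℕ) :
    ∑' x, π x * (smallProb P ω ℓ i x * smallProb P ω m j x)
      ≤ pathExp π P (i + j + 1) ({l | IsSmallIn ω (ℓ + m) l i}.indicator 1) := by
  rw [← tsum_pathExp_past_future hdb]
  gcongr with x
  rw [smallProb, smallProb, ← pathExp_mul_const]
  refine pathExp_mono fun past hpast => ?_
  rw [← pathExp_const_mul]
  refine pathExp_mono fun future _ => ?_
  by_cases hp : IsSmallIn ω ℓ (x :: past) 0 <;> by_cases hf : IsSmallIn ω m (x :: future) 0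
  · have h := hp.reverse_append_cons hf
    rw [hpast] at h
    simp [hp, hf, h]
  all_goals simp [hp, hf]

lemma sum_pathExp_isSmallIn_le (hπ : ∑' x, π x ≤ 1) (hP : ∀ x, ∑' y, P x y ≤ 1) (ω : S → α)
    (ℓ n : ℕ) :
    ∑ j ∈ range n, pathExp π P n ({l | IsSmallIn ω ℓ l j}.indicator 1) ≤ ℓ + 1 := by
  classical
  rw [← pathExp_finsetSum]
  refine (pathExp_mono fun l hl => ?_).trans (pathExp_const_le hπ hP _)
  simp only [Set.indicator_apply, Set.mem_ofPred_eq, Pi.one_apply, sum_boole, ← hl]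
  exact_mod_cast card_isSmallIn_le ω ℓ l

theorem succ_mul_sq_tsum_smallProb_le (hπ : ∑' x, π x ≤ 1) (hP : ∀ x, ∑' y, P x y ≤ 1)
    (hdb : ∀ x y, π x * P x y = π y * P y x) (ω : S → α) (ℓ k : ℕ) :
    ((k : ℝ≥0∞) + 1) * (∑' x, π x * smallProb P ω ℓ k x) ^ 2 ≤ 2 * ℓ + 1 := by
  have sq_le (j : ℕ) (hj : j ∈ range (k + 1)) : (∑' x, π x * smallProb P ω ℓ k x) ^ 2
      ≤ pathExp π P (k + 1) ({l | IsSmallIn ω (ℓ + ℓ) l j}.indicator 1) := by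
    have hjk : j ≤ k := mem_range_succ_iff.1 hj
    calc (∑' x, π x * smallProb P ω ℓ k x) ^ 2
        ≤ (∑' x, π x) * ∑' x, π x * smallProb P ω ℓ k x ^ 2 :=
          sq_tsum_mul_le_tsum_mul_tsum_mul_sq _ _
      _ ≤ ∑' x, π x * smallProb P ω ℓ k x ^ 2 := mul_le_of_le_one_left' hπ
      _ ≤ ∑' x, π x * (smallProb P ω ℓ j x * smallProb P ω ℓ (k - j) x) := by
          gcongr with x
          rw [sq]
          exact mul_le_mul' (antitone_smallProb hP x hjk)
            (antitone_smallProb hP x (Nat.sub_le k j))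
      _ ≤ pathExp π P (k + 1) ({l | IsSmallIn ω (ℓ + ℓ) l j}.indicator 1) := by
          simpa only [Nat.add_sub_cancel' hjk] using
            tsum_smallProb_mul_smallProb_le hdb ω ℓ ℓ j (k - j)
  calc ((k : ℝ≥0∞) + 1) * (∑' x, π x * smallProb P ω ℓ k x) ^ 2
      = ∑ _j ∈ range (k + 1), (∑' x, π x * smallProb P ω ℓ k x) ^ 2 := by simp
    _ ≤ ∑ j ∈ range (k + 1), pathExp π P (k + 1) ({l | IsSmallIn ω (ℓ + ℓ) l j}.indicator 1) :=
        sum_le_sum sq_le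
    _ ≤ (ℓ + ℓ : ℕ) + 1 := sum_pathExp_isSmallIn_le hπ hP ω _ _
    _ = 2 * ℓ + 1 := by push_cast; ring

end SmallProbability

section Chain

variable {Ω S : Type*} [MeasurableSpace Ω] {μ : Measure Ω} {X : ℕ → Ω → S} {π : S → ℝ≥0∞}
  {P : S → S → ℝ≥0∞}

lemma detailed_balance_of_reversible
    (hX : ∀ x : ℕ → S,
      μ {a | ∀ i ≤ 1, X i a = x i} = π (x 0) * ∏ i ∈ range 1, P (x i) (x (i + 1)))
    (hrev : ∀ x : ℕ → S, μ {a | ∀ i ≤ 1, X i a = x i} = μ {a | ∀ i ≤ 1, X i a = x (1 - i)})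
    (x y : S) : π x * P x y = π y * P y x := by
  have hxy (x y : S) : μ {a | X 0 a = x ∧ X 1 a = y} = π x * P x y := by
    simpa [Nat.le_one_iff_eq_zero_or_eq_one] using hX fun i => if i = 0 then x else y
  have hswap : μ {a | X 0 a = x ∧ X 1 a = y} = μ {a | X 0 a = y ∧ X 1 a = x} := by
    simpa [Nat.le_one_iff_eq_zero_or_eq_one] using hrev fun i => if i = 0 then x else y
  rw [← hxy, ← hxy, hswap]

lemma measure_isSmallAt_zero_le [Countable S] {k : ℕ}
    (hX : ∀ x : ℕ → S,
      μ {a | ∀ i ≤ k, X i a = x i} = π (x 0) * ∏ i ∈ range k, P (x i) (x (i + 1)))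
    (ω : S → ℝ) (ℓ : ℕ) :
    μ {a | IsSmallAt X ω 0 ℓ k a} ≤ ∑' x, π x * smallProb P ω ℓ k x := by
  simp only [isSmallAt_iff_isSmallIn X ω k.zero_le]
  refine (measure_path_mem_le_pathExp hX {l | IsSmallIn ω ℓ l 0}).trans_eq ?_
  rw [pathExp_succ]
  rfl

end Chain

lemma toReal_le_sqrt_div_of_mul_sq_le {x : ℝ≥0∞} {b c : NNReal} (hb : b ≠ 0)
    (h : b * x ^ 2 ≤ c) : x.toReal ≤ √(c / b) := by
  refine Real.le_sqrt_of_sq_le ?_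
  rw [← ENNReal.toReal_pow, ← NNReal.coe_div]
  refine ENNReal.toReal_le_coe_of_le_coe ?_
  rwa [ENNReal.coe_div hb, ENNReal.le_div_iff_mul_le (by simp [hb]) (by simp), mul_comm]

/-- Let `X 0, X 1, ...` be a stationary reversible Markov chain on a countable
state space `S` with reversible stationary distribution `π`, `X 0 ~ π`, and label function
`ω : S → ℝ`.  (Reversibility: for every `k`, the joint distribution of `(X 0, ..., X k)`
equals that of `(X k, ..., X 0)`.)  Let `ρ_{0,ℓ}^k` be the probability that `X 0` is `ℓ`-small
among `X 0, ..., X k`.  Then `(k+1) · (ρ_{0,ℓ}^k)² ≤ 2ℓ + 1`; equivalently,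
`ρ_{0,ℓ}^k ≤ √((2ℓ+1)/(k+1))`. -/
theorem prob_small_le_sqrt
    {Ω S : Type*} [MeasurableSpace Ω] [Countable S]
    (μ : Measure Ω) [IsProbabilityMeasure μ]
    (X : ℕ → Ω → S) (π : S → ℝ≥0∞) (P : S → S → ℝ≥0∞) (ω : S → ℝ)
    (hπ : ∑' x, π x = 1)
    (hProw : ∀ x, ∑' y, P x y = 1)
    -- the chain is the Markov chain with initial distribution `π` and transition matrix `P`
    (hjoint : ∀ (n : ℕ) (x : ℕ → S),
      μ {a | ∀ i ≤ n, X i a = x i} = π (x 0) * ∏ i ∈ Finset.range n, P (x i) (x (i + 1)))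
    -- `π` is stationary
    (hstat : ∀ y, ∑' x, π x * P x y = π y)
    -- reversibility: `(X 0, ..., X k)` and `(X k, ..., X 0)` have the same joint distribution
    (hrev : ∀ (n : ℕ) (x : ℕ → S),
      μ {a | ∀ i ≤ n, X i a = x i} = μ {a | ∀ i ≤ n, X i a = x (n - i)})
    (ℓ k : ℕ) :
    ((k : ℝ≥0∞) + 1) * (μ {a | IsSmallAt X ω 0 ℓ k a}) ^ 2 ≤ 2 * ℓ + 1
    ∧ (μ {a | IsSmallAt X ω 0 ℓ k a}).toReal
        ≤ Real.sqrt ((2 * ℓ + 1) / (k + 1)) := by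
  have hdb := detailed_balance_of_reversible (hjoint 1) (hrev 1)
  have hbound : ((k : ℝ≥0∞) + 1) * (μ {a | IsSmallAt X ω 0 ℓ k a}) ^ 2 ≤ 2 * ℓ + 1 :=
    calc ((k : ℝ≥0∞) + 1) * (μ {a | IsSmallAt X ω 0 ℓ k a}) ^ 2
        ≤ (k + 1) * (∑' x, π x * smallProb P ω ℓ k x) ^ 2 := by
          gcongr
          exact measure_isSmallAt_zero_le (hjoint k) ω ℓ
      _ ≤ (2 * ℓ + 1 : ℝ≥0∞) :=
          succ_mul_sq_tsum_smallProb_le hπ.le (fun x => (hProw x).le) hdb ω ℓ k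
  refine ⟨hbound, ?_⟩
  exact_mod_cast toReal_le_sqrt_div_of_mul_sq_le (b := k + 1) (c := 2 * ℓ + 1) (by positivity)
    (by exact_mod_cast hbound)
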